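/- Assume that the dominating number 𝔡 is regular (cf(𝔡) = 𝔡). Then for each 𝔡-unbounded set X ⊆ [ω]^ω there exist a free ultrafilter U on ℕ and a U-scale Y ⊆ [ω]^ω such that the product space X × (Y ∪ Fin) is not Menger. -/

import Mathlib

open Cardinal

/-- Subsets of `ℕ` are identified with their characteristic functions `ℕ → Bool`;
this way `P(ℕ)` is the Cantor cube `2^ℕ`, carrying the product topology. -/
abbrev CSet : Type := ℕ → Bool

/-- The subset of `ℕ` coded by `a : CSet`. -/
def supp (a : CSet) : Set ℕ := {n | a n = true}

/-- `a ∈ [ω]^ω`: the coded set is infinite. -/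
def InfS (a : CSet) : Prop := (supp a).Infinite

/-- The increasing enumeration of the set coded by `a`. -/
noncomputable def enum (a : CSet) : ℕ → ℕ := Nat.nth (fun n => a n = true)

/-- `a ≤* b`: the set `[a ≤ b]` (computed on increasing enumerations) is cofinite. -/
def LeStarS (a b : CSet) : Prop := {n | ¬ enum a n ≤ enum b n}.Finite

/-- `a ≤_U b`: the set `[a ≤ b]` (computed on increasing enumerations) is in `U`. -/
def LeUS (U : Ultrafilter ℕ) (a b : CSet) : Prop := {n | enum a n ≤ enum b n} ∈ U

/-- An ultrafilter is free if it extends the cofinite filter. -/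
def Free (U : Ultrafilter ℕ) : Prop := (U : Filter ℕ) ≤ Filter.cofinite

/-- A subset of `[ω]^ω` is bounded if some element of `[ω]^ω` `≤*`-dominates it. -/
def BoundedS (A : Set CSet) : Prop := ∃ b : CSet, InfS b ∧ ∀ a ∈ A, LeStarS a b

/-- A subset of `[ω]^ω` is `≤_U`-bounded if some element of `[ω]^ω` `≤_U`-dominates it. -/
def UBoundedS (U : Ultrafilter ℕ) (A : Set CSet) : Prop :=
  ∃ b : CSet, InfS b ∧ ∀ a ∈ A, LeUS U a b

/-- `D ⊆ [ω]^ω` is dominating if it `≤*`-dominates every element of `[ω]^ω`. -/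
def DominatingS (D : Set CSet) : Prop :=
  (∀ d ∈ D, InfS d) ∧ ∀ a : CSet, InfS a → ∃ d ∈ D, LeStarS a d

/-- `𝔡`: the least cardinality of a dominating subset of `[ω]^ω`. -/
noncomputable def frakDS : Cardinal := sInf {c | ∃ D : Set CSet, DominatingS D ∧ c = #D}

/-- `𝔟(U)`: the least cardinality of a `≤_U`-unbounded subset of `[ω]^ω`. -/
noncomputable def frakBUS (U : Ultrafilter ℕ) : Cardinal :=
  sInf {c | ∃ A : Set CSet, (∀ a ∈ A, InfS a) ∧ ¬ UBoundedS U A ∧ c = #A}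

/-- `Y ⊆ [ω]^ω` is a `U`-scale if for every `b ∈ [ω]^ω` the relation `b ≤_U y` holds
for all but fewer than `𝔟(U)` many `y ∈ Y`. -/
def UScaleS (U : Ultrafilter ℕ) (Y : Set CSet) : Prop :=
  (∀ y ∈ Y, InfS y) ∧
    ∀ b : CSet, InfS b → #({y ∈ Y | ¬ LeUS U b y} : Set CSet) < frakBUS U

/-- `Fin`: the family of (codes of) finite subsets of `ℕ`. -/
def FinS : Set CSet := {a | (supp a).Finite}

/-- `2u := {2n : n ∈ u}` on codes. -/
def double (x : CSet) : CSet := fun n => if n % 2 = 0 then x (n / 2) else false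

/-- `a ⊎ b := {2k : k ∈ a} ∪ {2k+1 : k ∈ b}` on codes. -/
def uplus (a b : CSet) : CSet := fun n => if n % 2 = 0 then a (n / 2) else b (n / 2)

/-- Symmetric difference `⊕` on codes. -/
def symmD (a b : CSet) : CSet := fun n => xor (a n) (b n)

/-- `2U`: the ultrafilter generated by `{2u : u ∈ U}`, i.e. the pushforward of `U`
under `n ↦ 2n`. -/
def twoU (U : Ultrafilter ℕ) : Ultrafilter ℕ := U.map (fun n => 2 * n)

/-- A space is Menger if for every sequence of open covers there are finite
subfamilies whose unions form a cover. -/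
def Menger (Z : Type*) [TopologicalSpace Z] : Prop :=
  ∀ 𝒰 : ℕ → Set (Set Z), (∀ n, (∀ u ∈ 𝒰 n, IsOpen u) ∧ ⋃₀ 𝒰 n = Set.univ) →
    ∃ F : ℕ → Set (Set Z), (∀ n, F n ⊆ 𝒰 n ∧ (F n).Finite) ∧ (⋃ n, ⋃₀ F n) = Set.univ

/-!
Fix a dominating family `b i`, `i < 𝔡`, and choose `x j ∈ X` recursively so that the sets
`{n | b i n < x j (n / 2)}`, `i ≤ j`, have infinite finite intersections: at every stage there are
fewer than `𝔡` conditions, each excludes only a bounded subset of `X`, and `𝔡` is regular. Let `U`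
be a free ultrafilter containing these sets, let `d j` dominate `x j` and `b j` pointwise, and put
`y j = x j ⊎ d j`. Since `x j (n / 2) ≤ y j n`, the `y j` form a `U`-scale. On the other hand
`2 (x j) ⊕ y j = ∅ ⊎ d j`, so the continuous map `(x, y) ↦ 2x ⊕ y` sends `X × (Y ∪ Fin)` onto a
dominating subset of `[ω]^ω`, which is impossible for a Menger space.
-/

open Filter

/-! ### Increasing enumerations -/

theorem leStarS_iff_eventually_le {a b : CSet} :
    LeStarS a b ↔ ∀ᶠ n in atTop, enum a n ≤ enum b n := by
  rw [← Nat.cofinite_eq_atTop]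
  rfl

theorem free_iff_le_atTop {U : Ultrafilter ℕ} : Free U ↔ (U : Filter ℕ) ≤ atTop := by
  rw [← Nat.cofinite_eq_atTop]
  rfl

theorem InfS.enum_strictMono {a : CSet} (ha : InfS a) : StrictMono (enum a) :=
  Nat.nth_strictMono ha

theorem InfS.le_enum_iff {a : CSet} (ha : InfS a) {m n : ℕ} :
    m ≤ enum a n ↔ Nat.count (fun i => a i = true) m ≤ n :=
  (Nat.count_le_iff_le_nth ha).symm

theorem InfS.enum_eq_iff {a : CSet} (ha : InfS a) {m n : ℕ} :
    enum a n = m ↔ a m = true ∧ Nat.count (fun i => a i = true) m = n := by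
  constructor
  · rintro rfl
    exact ⟨Nat.nth_mem_of_infinite ha n, Nat.count_nth_of_infinite ha n⟩
  · rintro ⟨hm, rfl⟩
    exact Nat.nth_count hm

theorem exists_infS_enum_eq {g : ℕ → ℕ} (hg : StrictMono g) : ∃ a : CSet, InfS a ∧ enum a = g := by
  classical
  let a : CSet := fun n => decide (n ∈ Set.range g)
  have hsupp : supp a = Set.range g := by
    ext n
    simp [supp, a]
  have ha : InfS a := by
    rw [InfS, hsupp]
    exact Set.infinite_range_of_injective hg.injective
  exact ⟨a, ha, (ha.enum_strictMono.range_inj hg).1 ((Nat.range_nth_of_infinite ha).trans hsupp)⟩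

theorem exists_infS_le_enum (f : ℕ → ℕ) : ∃ a : CSet, InfS a ∧ f ≤ enum a := by
  obtain ⟨g, hg, hfg⟩ := extraction_forall_of_eventually fun n => eventually_ge_atTop (f n)
  obtain ⟨a, ha, rfl⟩ := exists_infS_enum_eq hg
  exact ⟨a, ha, hfg⟩

/-! ### Set operations on codes -/

theorem count_uplus (a b : CSet) (m : ℕ) :
    Nat.count (fun i => uplus a b i = true) (2 * m) =
      Nat.count (fun i => a i = true) m + Nat.count (fun i => b i = true) m := by
  induction m with
  | zero => simp
  | succ m ih =>
    have heven : uplus a b (2 * m) = a m := by simp [uplus]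
    have hodd : uplus a b (2 * m + 1) = b m := by grind [uplus]
    rw [mul_add_one, Nat.count_succ, Nat.count_succ, ih, Nat.count_succ, Nat.count_succ, heven,
      hodd]
    omega

theorem InfS.double {x : CSet} (hx : InfS x) : InfS (double x) := by
  refine (hx.image (f := (2 * ·)) (mul_right_injective₀ two_ne_zero).injOn).mono ?_
  rintro _ ⟨k, hk, rfl⟩
  simpa [supp, _root_.double] using hk

theorem InfS.uplus (a : CSet) {b : CSet} (hb : InfS b) : InfS (uplus a b) := by
  refine (hb.image (f := (2 * · + 1)) fun i _ j _ hij => by simpa using hij).mono ?_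
  rintro _ ⟨k, hk, rfl⟩
  have hodd : _root_.uplus a b (2 * k + 1) = b k := by grind [_root_.uplus]
  exact hodd.trans hk

theorem InfS.symmD_finS {a f : CSet} (ha : InfS a) (hf : f ∈ FinS) : InfS (symmD a f) := by
  refine (ha.sdiff hf).mono ?_
  rintro n ⟨hna, hnf⟩
  simp_all [supp, symmD]

theorem symmD_self (a : CSet) : symmD a a = fun _ => false := by
  funext n
  simp [symmD]

theorem symmD_double_uplus (x a b : CSet) :
    symmD (double x) (uplus a b) = uplus (symmD x a) b := by
  funext n
  by_cases h : n % 2 = 0 <;> simp [symmD, double, uplus, h]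

theorem InfS.two_mul_le_enum_uplus_iff {a b : CSet} (hb : InfS b) {m n : ℕ} :
    2 * m ≤ enum (_root_.uplus a b) n ↔
      Nat.count (fun i => a i = true) m + Nat.count (fun i => b i = true) m ≤ n := by
  rw [(hb.uplus a).le_enum_iff, count_uplus]

theorem min_enum_half_le_enum_uplus {a b : CSet} (ha : InfS a) (hb : InfS b) (n : ℕ) :
    min (enum a (n / 2)) (enum b (n / 2)) ≤ enum (uplus a b) n := by
  set m := min (enum a (n / 2)) (enum b (n / 2))
  have hcount_a : Nat.count (fun i => a i = true) m ≤ n / 2 := ha.le_enum_iff.1 (min_le_left _ _)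
  have hcount_b : Nat.count (fun i => b i = true) m ≤ n / 2 := hb.le_enum_iff.1 (min_le_right _ _)
  calc m ≤ 2 * m := Nat.le_mul_of_pos_left m two_pos
    _ ≤ enum (uplus a b) n := hb.two_mul_le_enum_uplus_iff.2 (by omega)

theorem enum_le_enum_uplus_empty {b : CSet} (hb : InfS b) :
    enum b ≤ enum (uplus (fun _ => false) b) := fun n => by
  have hcount : Nat.count (fun i => b i = true) (enum b n) ≤ n := hb.le_enum_iff.1 le_rfl
  calc enum b n ≤ 2 * enum b n := Nat.le_mul_of_pos_left _ two_pos
    _ ≤ enum (uplus (fun _ => false) b) n := hb.two_mul_le_enum_uplus_iff.2 (by simpa using hcount)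

/-! ### Bounded and dominating families -/

theorem boundedS_of_eventually_le {A : Set CSet} {f : ℕ → ℕ}
    (h : ∀ a ∈ A, ∀ᶠ n in atTop, enum a n ≤ f n) : BoundedS A := by
  obtain ⟨b, hb, hfb⟩ := exists_infS_le_enum f
  exact ⟨b, hb, fun a ha =>
    leStarS_iff_eventually_le.2 ((h a ha).mono fun n hn => hn.trans (hfb n))⟩

theorem DominatingS.exists_eventually_le {D : Set CSet} (hD : DominatingS D) (f : ℕ → ℕ) :
    ∃ d ∈ D, ∀ᶠ n in atTop, f n ≤ enum d n := by
  obtain ⟨a, ha, hfa⟩ := exists_infS_le_enum f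
  obtain ⟨d, hd, had⟩ := hD.2 a ha
  exact ⟨d, hd, (leStarS_iff_eventually_le.1 had).mono fun n hn => (hfa n).trans hn⟩

theorem DominatingS.infinite {D : Set CSet} (hD : DominatingS D) : D.Infinite := by
  intro hfin
  obtain ⟨f, hf⟩ := (hfin.image enum).bddAbove
  obtain ⟨d, hd, hfd⟩ := hD.exists_eventually_le (f + 1)
  obtain ⟨n, hn⟩ := hfd.exists
  exact (hn.trans (hf (Set.mem_image_of_mem enum hd) n)).not_gt (Nat.lt_succ_self _)

theorem exists_dominatingS_mk_eq : ∃ D : Set CSet, DominatingS D ∧ frakDS = #D :=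
  csInf_mem (s := {c | ∃ D : Set CSet, DominatingS D ∧ c = #D})
    ⟨_, {a | InfS a}, ⟨fun _ h => h, fun a ha => ⟨a, ha, by simp [LeStarS]⟩⟩, rfl⟩

theorem aleph0_le_frakDS : ℵ₀ ≤ frakDS := by
  obtain ⟨D, hD, hcard⟩ := exists_dominatingS_mk_eq
  rw [hcard, Cardinal.aleph0_le_mk_iff, Set.infinite_coe_iff]
  exact hD.infinite

theorem exists_dominating_ordToType :
    ∃ b : frakDS.ord.ToType → ℕ → ℕ, ∀ f : ℕ → ℕ, ∃ i, ∀ᶠ n in atTop, f n ≤ b i n := by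
  obtain ⟨D, hD, hcard⟩ := exists_dominatingS_mk_eq
  obtain ⟨e⟩ := Cardinal.eq.1 ((Cardinal.mk_ord_toType frakDS).trans hcard)
  refine ⟨fun i => enum (e i), fun f => ?_⟩
  obtain ⟨d, hd, hfd⟩ := hD.exists_eventually_le f
  exact ⟨e.symm ⟨d, hd⟩, by simpa using hfd⟩

/-! ### Scales -/

theorem not_uBoundedS_setOf_infS (U : Ultrafilter ℕ) : ¬ UBoundedS U {a | InfS a} := by
  rintro ⟨b, -, hb⟩
  obtain ⟨a, ha, hba⟩ := exists_infS_le_enum (enum b + 1)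
  obtain ⟨n, hn⟩ := U.nonempty_of_mem (hb a ha)
  exact ((hba n).trans hn).not_gt (Nat.lt_succ_self _)

theorem le_frakBUS {U : Ultrafilter ℕ} {κ : Cardinal}
    (h : ∀ A : Set CSet, (∀ a ∈ A, InfS a) → #A < κ → UBoundedS U A) : κ ≤ frakBUS U := by
  refine le_csInf ⟨_, {a | InfS a}, fun _ ha => ha, not_uBoundedS_setOf_infS U, rfl⟩ ?_
  rintro _ ⟨A, hA, hunb, rfl⟩
  by_contra! hlt
  exact hunb (h A hA hlt)

theorem le_frakBUS_of_forall_exists_leUS {U : Ultrafilter ℕ} {κ : Cardinal.{0}}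
    (hκ : κ.IsRegular) {y : κ.ord.ToType → CSet} (hy : ∀ i, InfS (y i))
    (hle : ∀ a, InfS a → ∃ i, ∀ j, i ≤ j → LeUS U a (y j)) : κ ≤ frakBUS U := by
  refine le_frakBUS fun A hA hAκ => ?_
  choose i hi using fun a : A => hle a (hA a a.2)
  have hnot : ¬ IsCofinal (Set.range i) := fun hcof => by
    refine hAκ.not_ge ?_
    calc κ = Order.cof κ.ord.ToType := by rw [Ordinal.cof_toType, hκ.cof_ord]
      _ ≤ #(Set.range i) := Order.cof_le hcof
      _ ≤ #A := Cardinal.mk_range_le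
  obtain ⟨j, hj⟩ := not_isCofinal_iff.1 hnot
  exact ⟨y j, hy j, fun a ha => hi ⟨a, ha⟩ j (hj _ ⟨_, rfl⟩).le⟩

theorem uScaleS_range {U : Ultrafilter ℕ} {κ : Cardinal.{0}}
    (hκ : κ.IsRegular) {y : κ.ord.ToType → CSet} (hy : ∀ i, InfS (y i))
    (hle : ∀ a, InfS a → ∃ i, ∀ j, i ≤ j → LeUS U a (y j)) : UScaleS U (Set.range y) := by
  refine ⟨Set.forall_mem_range.2 hy, fun a ha => ?_⟩
  obtain ⟨i, hi⟩ := hle a ha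
  have hsub : {z ∈ Set.range y | ¬ LeUS U a z} ⊆ y '' Set.Iio i := by
    rintro _ ⟨⟨j, rfl⟩, hj⟩
    exact ⟨j, not_le.1 fun hij => hj (hi j hij), rfl⟩
  calc #{z ∈ Set.range y | ¬ LeUS U a z} ≤ #(y '' Set.Iio i) := Cardinal.mk_le_mk_of_subset hsub
    _ ≤ #(Set.Iio i) := Cardinal.mk_image_le
    _ < κ := by simpa using Cardinal.mk_Iio_lt i
    _ ≤ frakBUS U := le_frakBUS_of_forall_exists_leUS hκ hy hle

/-! ### Centered families -/

/-- A family of subsets of `α` is centered if its finite subfamilies have infinite intersections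
(the strong finite intersection property); the empty subfamily makes `α` infinite. Such families
are exactly the ones contained in a free ultrafilter. -/
def Centered {α : Type*} (𝒜 : Set (Set α)) : Prop :=
  ∀ t ⊆ 𝒜, t.Finite → (⋂₀ t).Infinite

theorem centered_empty {α : Type*} [Infinite α] : Centered (∅ : Set (Set α)) := by
  intro t ht _
  rw [Set.subset_empty_iff.1 ht, Set.sInter_empty]
  exact Set.infinite_univ

theorem Centered.mono {α : Type*} {𝒜 ℬ : Set (Set α)} (hℬ : Centered ℬ) (h : 𝒜 ⊆ ℬ) :
    Centered 𝒜 :=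
  fun t ht => hℬ t (ht.trans h)

theorem centered_range_iff {α J : Type*} {A : J → Set α} :
    Centered (Set.range A) ↔ ∀ s : Finset J, (⋂ j ∈ s, A j).Infinite := by
  classical
  constructor
  · intro h s
    rw [← Finset.set_biInter_coe, ← Set.sInter_image]
    exact h _ (Set.image_subset_range A _) (s.finite_toSet.image A)
  · intro h t ht htfin
    obtain ⟨s, rfl⟩ := htfin.exists_finset_coe
    obtain ⟨s, -, rfl⟩ := Finset.subset_set_image_iff.1 (Set.image_univ ▸ ht)
    simpa using h s

theorem centered_iUnion_of_directed {α ι : Type*} [Infinite α] {𝒜 : ι → Set (Set α)}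
    (hdir : Directed (· ⊆ ·) 𝒜) (h : ∀ i, Centered (𝒜 i)) : Centered (⋃ i, 𝒜 i) := by
  cases isEmpty_or_nonempty ι
  · simpa using centered_empty
  · intro t ht htfin
    obtain ⟨i, hi⟩ := hdir.exists_mem_subset_of_finset_subset_biUnion (s := htfin.toFinset)
      (by simpa using ht)
    exact h i t (by simpa using hi) htfin

theorem Centered.exists_ultrafilter {α : Type*} {𝒜 : Set (Set α)} (h : Centered 𝒜) :
    ∃ U : Ultrafilter α, (U : Filter α) ≤ cofinite ∧ ∀ A ∈ 𝒜, A ∈ U := by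
  have hne : (cofinite ⊓ generate 𝒜).NeBot := by
    rw [inf_neBot_iff]
    intro s hs s' hs'
    obtain ⟨t, ht, htfin, hts'⟩ := mem_generate_iff.1 hs'
    obtain ⟨n, hnt, hns⟩ := ((h t ht htfin).sdiff (mem_cofinite.1 hs)).nonempty
    exact ⟨n, not_not.1 hns, hts' hnt⟩
  have hle := Ultrafilter.of_le (cofinite ⊓ generate 𝒜)
  exact ⟨_, hle.trans inf_le_left, fun A hA =>
    hle.trans inf_le_right (mem_generate_of_mem hA)⟩

theorem exists_forall_rel_of_wellFoundedLT {ι : Type*} [Preorder ι] [WellFoundedLT ι]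
    {C : ι → Type*} (R : ∀ i, (∀ j : Set.Iio i, C j) → C i → Prop) (h : ∀ i p, ∃ c, R i p c) :
    ∃ f : ∀ i, C i, ∀ i, R i (fun j => f j) (f i) := by
  choose next hnext using h
  let f : ∀ i, C i := (wellFounded_lt (α := ι)).fix fun i p => next i fun j => p j j.2
  have hf : ∀ i, f i = next i fun j => f j := fun i => WellFounded.fix_eq _ _ _
  exact ⟨f, fun i => by rw [hf i]; exact hnext i _⟩

theorem exists_centered_iUnion_of_wellFoundedLT {ι C α : Type*} [LinearOrder ι] [WellFoundedLT ι]
    [Nonempty C] [Infinite α] (𝒮 : ι → C → Set (Set α))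
    (h : ∀ i (p : Set.Iio i → C), Centered (⋃ j : Set.Iio i, 𝒮 j (p j)) →
      ∃ c, Centered ((⋃ j : Set.Iio i, 𝒮 j (p j)) ∪ 𝒮 i c)) :
    ∃ f : ι → C, Centered (⋃ i, 𝒮 i (f i)) := by
  obtain ⟨f, hf⟩ := exists_forall_rel_of_wellFoundedLT
    (fun i (p : Set.Iio i → C) c =>
      Centered (⋃ j : Set.Iio i, 𝒮 j (p j)) → Centered ((⋃ j : Set.Iio i, 𝒮 j (p j)) ∪ 𝒮 i c))
    fun i p => by
      by_cases hp : Centered (⋃ j : Set.Iio i, 𝒮 j (p j))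
      · exact (h i p hp).imp fun c hc _ => hc
      · exact ⟨Classical.arbitrary C, fun hp' => absurd hp' hp⟩
  let 𝒯 : ι → Set (Set α) := fun i => ⋃ j : Set.Iic i, 𝒮 j (f j)
  have hmono : Monotone 𝒯 := fun i i' hi =>
    Set.iUnion_subset fun j => Set.subset_iUnion_of_subset ⟨j, j.2.trans hi⟩ subset_rfl
  have hself : ∀ i, 𝒮 i (f i) ⊆ 𝒯 i := fun i =>
    Set.subset_iUnion_of_subset ⟨i, le_rfl⟩ subset_rfl
  have hcent : ∀ i, Centered (𝒯 i) := fun i => by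
    induction i using WellFoundedLT.induction with
    | ind i ih =>
      have hlt : Centered (⋃ j : Set.Iio i, 𝒯 j) :=
        centered_iUnion_of_directed (hmono.comp (Subtype.mono_coe _)).directed_le
          fun j => ih j j.2
      refine (hf i (hlt.mono (Set.iUnion_mono fun j => hself j))).mono (Set.iUnion_subset ?_)
      rintro ⟨j, hj⟩
      rcases (Set.mem_Iic.1 hj).lt_or_eq with hji | rfl
      · exact Set.subset_union_of_subset_left
          (Set.subset_iUnion (fun j : Set.Iio i => 𝒮 j (f j)) ⟨j, hji⟩) _
      · exact Set.subset_union_right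
  exact ⟨f, (centered_iUnion_of_directed hmono.directed_le hcent).mono (Set.iUnion_mono hself)⟩

/-! ### Unbounded families -/

/-- `X ⊆ [ω]^ω` is `κ`-unbounded if `#X ≥ κ` and every bounded subset of `X` has cardinality less
than `κ`: the notion of a `𝔡`-unbounded set with an arbitrary cardinal in place of `𝔡`. -/
structure UnboundedS (κ : Cardinal.{0}) (X : Set CSet) : Prop where
  infS : ∀ x ∈ X, InfS x
  le_mk : κ ≤ #X
  mk_lt : ∀ B ⊆ X, BoundedS B → #B < κ

theorem boundedS_of_eventually_mem_imp_le {A : Set CSet} (hA : ∀ a ∈ A, InfS a) {F : Set ℕ}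
    (hF : F.Infinite) {g h : ℕ → ℕ} (hh : Tendsto h atTop atTop)
    (hle : ∀ a ∈ A, ∀ᶠ n in atTop, n ∈ F → enum a (h n) ≤ g n) : BoundedS A := by
  obtain ⟨e, he, heF⟩ := extraction_forall_of_frequently fun m =>
    (Nat.frequently_atTop_iff_infinite.2 hF).and_eventually (hh.eventually_ge_atTop m)
  refine boundedS_of_eventually_le (f := g ∘ e) fun a ha => ?_
  filter_upwards [he.tendsto_atTop.eventually (hle a ha)] with m hm
  calc enum a m ≤ enum a (h (e m)) := (hA a ha).enum_strictMono.monotone (heF m).2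
    _ ≤ g (e m) := hm (heF m).1

theorem mk_finset_lt_of_lt {α : Type*} {κ : Cardinal} (hκ : ℵ₀ ≤ κ) (h : #α < κ) :
    #(Finset α) < κ := by
  cases finite_or_infinite α
  · exact (Cardinal.lt_aleph0_of_finite _).trans_le hκ
  · rwa [Cardinal.mk_finset_of_infinite]

namespace UnboundedS

variable {κ : Cardinal.{0}} {X : Set CSet} {h : ℕ → ℕ}

theorem exists_mem_forall_infinite (hX : UnboundedS κ X) (hκ : κ.IsRegular)
    (hh : Tendsto h atTop atTop) {J : Type} (hJ : #J < κ) {F : J → Set ℕ}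
    (hF : ∀ j, (F j).Infinite) (g : J → ℕ → ℕ) :
    ∃ x ∈ X, ∀ j, {n ∈ F j | g j n < enum x (h n)}.Infinite := by
  by_contra! hcon
  let A : J → Set CSet := fun j => {x ∈ X | {n ∈ F j | g j n < enum x (h n)}.Finite}
  have hA : ∀ j, #(A j) < κ := fun j =>
    hX.mk_lt _ (fun x hx => hx.1) <|
      boundedS_of_eventually_mem_imp_le (fun x hx => hX.infS x hx.1) (hF j) hh fun x hx => by
        rw [← Nat.cofinite_eq_atTop]
        filter_upwards [hx.2.eventually_cofinite_notMem] with n hn hnF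
        exact not_lt.1 fun hlt => hn ⟨hnF, hlt⟩
  have hXA : X ⊆ ⋃ j, A j := fun x hx => by
    obtain ⟨j, hj⟩ := hcon x hx
    exact Set.mem_iUnion.2 ⟨j, hx, by simpa using hj⟩
  refine hX.le_mk.not_gt ((Cardinal.mk_le_mk_of_subset hXA).trans_lt ?_)
  exact (Cardinal.card_iUnion_lt_iff_forall_of_isRegular hκ hJ).2 hA

theorem exists_mem_centered_union (hX : UnboundedS κ X) (hκ : κ.IsRegular)
    (hh : Tendsto h atTop atTop) {𝒜 : Set (Set ℕ)} (h𝒜 : Centered 𝒜) (h𝒜κ : #𝒜 < κ)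
    {K : Type} (hK : #K < κ) (g : K → ℕ → ℕ) :
    ∃ x ∈ X, Centered (𝒜 ∪ Set.range fun k => {n | g k n < enum x (h n)}) := by
  have hJ : #(Finset 𝒜 × Finset K) < κ := by
    rw [Cardinal.mk_prod, Cardinal.lift_id, Cardinal.lift_id]
    exact Cardinal.mul_lt_of_lt hκ.aleph0_le (mk_finset_lt_of_lt hκ.aleph0_le h𝒜κ)
      (mk_finset_lt_of_lt hκ.aleph0_le hK)
  have hinter : ∀ s : Finset 𝒜, (⋂ A ∈ s, (A : Set ℕ)).Infinite :=
    centered_range_iff.1 (by rwa [Subtype.range_coe])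
  obtain ⟨x, hxX, hx⟩ := hX.exists_mem_forall_infinite hκ hh hJ
    (F := fun p => ⋂ A ∈ p.1, (A : Set ℕ)) (fun p => hinter p.1) fun p n => p.2.sup fun k => g k n
  refine ⟨x, hxX, ?_⟩
  rw [← Subtype.range_coe (s := 𝒜), ← Set.Sum.elim_range, centered_range_iff]
  refine fun s => (hx (s.toLeft, s.toRight)).mono ?_
  rintro n ⟨hn, hlt⟩
  simp only [Set.mem_iInter] at hn ⊢
  rintro (A | k) hs
  · exact hn A (Finset.mem_toLeft.2 hs)
  · exact (Finset.le_sup (f := fun k => g k n) (Finset.mem_toRight.2 hs)).trans_lt hlt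

theorem exists_ultrafilter_forall_le (hX : UnboundedS κ X) (hκ : κ.IsRegular)
    (hh : Tendsto h atTop atTop) {ι : Type} [LinearOrder ι] [WellFoundedLT ι]
    (hι : ∀ i : ι, #(Set.Iic i) < κ) (b : ι → ℕ → ℕ) :
    ∃ U : Ultrafilter ℕ, Free U ∧ ∃ x : ι → X, ∀ i j, i ≤ j →
      ∀ᶠ n in (U : Filter ℕ), b i n < enum (x j) (h n) := by
  have : Nonempty X := by
    rw [← Cardinal.mk_ne_zero_iff]
    exact (hκ.pos.trans_le hX.le_mk).ne'
  let 𝒮 : ι → X → Set (Set ℕ) := fun i c =>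
    Set.range fun k : Set.Iic i => {n | b k n < enum c (h n)}
  obtain ⟨x, hx⟩ := exists_centered_iUnion_of_wellFoundedLT 𝒮 fun i p hp => by
    have hIio : #(Set.Iio i) < κ :=
      (Cardinal.mk_le_mk_of_subset Set.Iio_subset_Iic_self).trans_lt (hι i)
    have hcard : #(⋃ j : Set.Iio i, 𝒮 j (p j)) < κ :=
      (Cardinal.card_iUnion_lt_iff_forall_of_isRegular hκ hIio).2 fun j =>
        Cardinal.mk_range_le.trans_lt (hι j)
    obtain ⟨c, hc, hcent⟩ := hX.exists_mem_centered_union hκ hh hp hcard (hι i) fun k => b k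
    exact ⟨⟨c, hc⟩, hcent⟩
  obtain ⟨U, hU, hmem⟩ := hx.exists_ultrafilter
  exact ⟨U, hU, x, fun i j hij => hmem _ (Set.mem_iUnion.2 ⟨j, ⟨i, hij⟩, rfl⟩)⟩

end UnboundedS

/-! ### The Menger property -/

theorem continuous_count (m : ℕ) :
    Continuous fun a : CSet => Nat.count (fun i => a i = true) m := by
  simp only [Nat.count_eq_card_filter_range, Finset.card_filter]
  exact continuous_finsetSum _ fun i _ =>
    (continuous_of_discreteTopology (f := fun c : Bool => if c = true then 1 else 0)).comp
      (continuous_apply i)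

theorem continuous_enum_apply (n : ℕ) : Continuous fun a : {a // InfS a} => enum a n := by
  refine continuous_discrete_rng.2 fun m => ?_
  have hpre : (fun a : {a // InfS a} => enum a n) ⁻¹' {m} =
      {a | a.1 m = true} ∩ {a | Nat.count (fun i => a.1 i = true) m = n} :=
    Set.ext fun a => a.2.enum_eq_iff
  rw [hpre]
  exact ((isOpen_discrete {true}).preimage ((continuous_apply m).comp continuous_subtype_val)).inter
    ((isOpen_discrete {n}).preimage ((continuous_count m).comp continuous_subtype_val))

theorem continuous_double : Continuous double := by
  refine continuous_pi fun n => ?_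
  unfold double
  split_ifs <;> fun_prop

theorem continuous_symmD : Continuous fun p : CSet × CSet => symmD p.1 p.2 :=
  continuous_pi fun n =>
    (continuous_of_discreteTopology (f := fun c : Bool × Bool => xor c.1 c.2)).comp
      (f := fun p : CSet × CSet => (p.1 n, p.2 n)) (by fun_prop)

namespace Menger

variable {Z : Type*} [TopologicalSpace Z] {f : ℕ → Z → ℕ}

theorem exists_forall_exists_le (hZ : Menger Z) (hf : ∀ n, Continuous (f n)) :
    ∃ M : ℕ → ℕ, ∀ z, ∃ n, f n z ≤ M n := by
  obtain ⟨F, hF, hcover⟩ := hZ (fun n => Set.range fun m => f n ⁻¹' Set.Iic m) fun n =>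
    ⟨Set.forall_mem_range.2 fun m => (isOpen_discrete (Set.Iic m)).preimage (hf n),
      Set.eq_univ_of_forall fun z => ⟨_, ⟨f n z, rfl⟩, le_refl (f n z)⟩⟩
  have hM : ∀ n, ∃ m, ⋃₀ F n ⊆ f n ⁻¹' Set.Iic m := fun n => by
    choose! g hg using (hF n).1
    obtain ⟨m, hm⟩ := ((hF n).2.image g).bddAbove
    refine ⟨m, Set.sUnion_subset fun u hu => ?_⟩
    rw [← hg hu]
    exact Set.preimage_mono (Set.Iic_subset_Iic.2 (hm (Set.mem_image_of_mem g hu)))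
  choose M hM using hM
  refine ⟨M, fun z => ?_⟩
  obtain ⟨n, hn⟩ := Set.mem_iUnion.1 (hcover ▸ Set.mem_univ z)
  exact ⟨n, hM n hn⟩

theorem exists_forall_frequently_le (hZ : Menger Z) (hf : ∀ n, Continuous (f n)) :
    ∃ M : ℕ → ℕ, ∀ z, ∃ᶠ n in atTop, f n z ≤ M n := by
  choose M hM using fun k =>
    hZ.exists_forall_exists_le (f := fun n => f (k + n)) fun n => hf (k + n)
  refine ⟨fun n => (Finset.range (n + 1)).sup fun k => M k (n - k), fun z => ?_⟩
  refine frequently_atTop.2 fun k => ?_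
  obtain ⟨n, hn⟩ := hM k z
  refine ⟨k + n, Nat.le_add_right k n, hn.trans ?_⟩
  simpa using Finset.le_sup (f := fun i => M i (k + n - i))
    (Finset.mem_range.2 (show k < k + n + 1 by omega))

theorem exists_forall_frequently_enum_le (hZ : Menger Z) {Φ : Z → CSet} (hΦ : Continuous Φ)
    (hinf : ∀ z, InfS (Φ z)) : ∃ M : ℕ → ℕ, ∀ z, ∃ᶠ n in atTop, enum (Φ z) n ≤ M n :=
  hZ.exists_forall_frequently_le fun n => (continuous_enum_apply n).comp (hΦ.subtype_mk hinf)

end Menger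

theorem not_menger_prod_range_uplus_union_finS {ι : Type*} {X : Set CSet} (hX : ∀ x ∈ X, InfS x)
    (x : ι → X) {d : ι → CSet} (hd : ∀ i, InfS (d i))
    (hdom : ∀ f : ℕ → ℕ, ∃ i, ∀ᶠ n in atTop, f n ≤ enum (d i) n) :
    ¬ Menger (↥X × ↥((Set.range fun i => uplus (x i) (d i)) ∪ FinS)) := by
  intro hM
  obtain ⟨M, hlt⟩ := hM.exists_forall_frequently_enum_le
    (Φ := fun z => symmD (double z.1) z.2)
    (continuous_symmD.comp ((continuous_double.comp (by fun_prop)).prodMk (by fun_prop))) (by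
      rintro ⟨⟨z, hz⟩, ⟨_, ⟨i, rfl⟩ | hw⟩⟩
      · simpa only [symmD_double_uplus] using (hd i).uplus _
      · exact (hX z hz).double.symmD_finS hw)
  obtain ⟨i, hi⟩ := hdom (M + 1)
  obtain ⟨n, hle, hge⟩ := ((hlt (x i, ⟨_, Or.inl ⟨i, rfl⟩⟩)).and_eventually hi).exists
  simp only [symmD_double_uplus, symmD_self] at hle
  exact (hge.trans ((enum_le_enum_uplus_empty (hd i) n).trans hle)).not_gt (Nat.lt_succ_self _)

/-- if `cf(𝔡) = 𝔡`, then for each `𝔡`-unbounded `X ⊆ [ω]^ω` there are a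
free ultrafilter `U` and a `U`-scale `Y` such that `X × (Y ∪ Fin)` is not Menger. -/
theorem stmt6 (hreg : frakDS.ord.cof = frakDS)
    (X : Set CSet) (hXinf : ∀ x ∈ X, InfS x)
    (hXcard : frakDS ≤ #X)
    (hXunb : ∀ B ⊆ X, BoundedS B → #B < frakDS) :
    ∃ U : Ultrafilter ℕ, Free U ∧
      ∃ Y : Set CSet, UScaleS U Y ∧ ¬ Menger (↥X × ↥(Y ∪ FinS)) := by
  have hR : frakDS.IsRegular := ⟨aleph0_le_frakDS, hreg.ge⟩
  have hIic : ∀ i : frakDS.ord.ToType, #(Set.Iic i) < frakDS := fun i => by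
    simpa using Cardinal.mk_Iic_lt i (by simp) (by simpa using aleph0_le_frakDS)
  obtain ⟨b, hb⟩ := exists_dominating_ordToType
  have hX : UnboundedS frakDS X := ⟨hXinf, hXcard, hXunb⟩
  obtain ⟨U, hU, x, hx⟩ := hX.exists_ultrafilter_forall_le hR
    (Nat.tendsto_div_const_atTop two_ne_zero) hIic b
  choose d hd hle using fun i => exists_infS_le_enum (enum (x i) ⊔ b i)
  refine ⟨U, hU, Set.range fun i => uplus (x i) (d i),
    uScaleS_range hR (fun i => (hd i).uplus _) fun a _ => ?_,
    not_menger_prod_range_uplus_union_finS hXinf x hd fun f => ?_⟩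
  · obtain ⟨i, hi⟩ := hb (enum a)
    refine ⟨i, fun j hij => ?_⟩
    filter_upwards [free_iff_le_atTop.1 hU hi, hx i j hij] with n hab hbx
    calc enum a n ≤ enum (x j) (n / 2) := hab.trans hbx.le
      _ = min (enum (x j) (n / 2)) (enum (d j) (n / 2)) :=
        (min_eq_left (le_sup_left.trans (hle j) _)).symm
      _ ≤ enum (uplus (x j) (d j)) n := min_enum_half_le_enum_uplus (hXinf _ (x j).2) (hd j) n
  · obtain ⟨i, hi⟩ := hb f
    exact ⟨i, hi.mono fun n hn => hn.trans (le_sup_right.trans (hle i) n)⟩
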